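/- arXiv:2605.02145 — 5 statements merged into one kernel-verified Lean document; each statement's English description precedes it below -/
import Mathlib

section
/- Let f₁, …, f_k : (−1, 0) → ℝ be pairwise distinct functions, each of one of the two forms h ↦ |h|^r for some nonnegative rational number r, or h ↦ h^m·ln|h| for some positive integer m. Then there exists ε₀ ∈ (0,1) such that for every nonzero coefficient vector (c₁, …, c_k) ∈ ℝ^k, the function M(h) = Σ_{s=1}^{k} c_s·f_s(h) has at most k − 1 zeros in (−ε₀, 0) counted with multiplicity; that is, for any finitely many distinct points z₁, …, z_d ∈ (−ε₀, 0) and positive integers m₁, …, m_d such that M and its first m_ℓ − 1 derivatives all vanish at z_ℓ for each ℓ, one has m₁ + ⋯ + m_d ≤ k − 1. -/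
open Filter Topology Asymptotics

/-- the logarithmic coordinate -/
noncomputable def zcT (h : ℝ) : ℝ := -Real.log (-h)

/-- the monomial in the logarithmic coordinate -/
noncomputable def zcE (p : ℝ × ℕ) (t : ℝ) : ℝ := Real.exp (p.1 * t) * t ^ p.2

lemma zcT_hasDerivAt {h : ℝ} (hh : h < 0) : HasDerivAt zcT (Real.exp (zcT h)) h := by
  have h1 : HasDerivAt (fun x : ℝ => -Real.log (-x)) (-((-1) / (-h))) h :=
    ((hasDerivAt_id h).neg.log (by simpa using hh.ne)).neg
  have h2 : Real.exp (zcT h) = -((-1) / (-h)) := by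
    unfold zcT
    rw [Real.exp_neg, Real.exp_log (by linarith)]
    field_simp
  rw [h2]; exact h1

lemma zcT_analyticAt {h : ℝ} (hh : h < 0) : AnalyticAt ℝ zcT h := by
  unfold zcT
  exact (analyticAt_id.neg.log (by simpa using hh)).neg

lemma zcT_tendsto : Tendsto zcT (𝓝[<] 0) atTop := by
  have h1 : Tendsto Real.log (𝓝[<] 0) atBot := Real.tendsto_log_nhdsLT_zero
  have h2 := tendsto_neg_atBot_atTop.comp h1
  refine h2.congr fun x => ?_
  simp [zcT]

lemma zcE_analyticAt (p : ℝ × ℕ) {h : ℝ} (hh : h < 0) :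
    AnalyticAt ℝ (fun x => zcE p (zcT x)) h := by
  unfold zcE
  exact ((analyticAt_const.mul (zcT_analyticAt hh)).rexp).mul ((zcT_analyticAt hh).pow _)

lemma zcE_littleO {p q : ℝ × ℕ} (h : q.1 < p.1 ∨ (q.1 = p.1 ∧ q.2 < p.2)) :
    zcE q =o[atTop] zcE p := by
  unfold zcE
  rcases h with h | ⟨h1, h2⟩
  · have h0 : (fun t : ℝ => t ^ q.2) =o[atTop] fun t => Real.exp ((p.1 - q.1) * t) :=
      isLittleO_pow_exp_pos_mul_atTop _ (sub_pos.2 h)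
    have h1 := (isBigO_refl (fun t : ℝ => Real.exp (q.1 * t)) atTop).mul_isLittleO h0
    have h2 : (fun t : ℝ => Real.exp (q.1 * t) * Real.exp ((p.1 - q.1) * t)) =O[atTop]
        fun t => Real.exp (p.1 * t) * t ^ p.2 := by
      refine IsBigO.of_bound 1 ?_
      filter_upwards [eventually_ge_atTop 1] with t ht
      rw [← Real.exp_add, one_mul, norm_mul]
      have e : q.1 * t + (p.1 - q.1) * t = p.1 * t := by ring
      rw [e]
      refine le_mul_of_one_le_right (norm_nonneg _) ?_
      rw [norm_pow]
      exact one_le_pow₀ (by rw [Real.norm_eq_abs]; exact ht.trans (le_abs_self t))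
    exact h1.trans_isBigO h2
  · rw [h1]
    exact (isBigO_refl _ _).mul_isLittleO (isLittleO_pow_pow_atTop_of_lt h2)

lemma zcE_sum_ne {ι : Type*} (S : Finset ι) (p : ι → ℝ × ℕ) (hp : Function.Injective p)
    (a : ι → ℝ) (ha : ∃ i ∈ S, a i ≠ 0) :
    ∀ᶠ t in atTop, ∑ i ∈ S, a i * zcE (p i) t ≠ 0 := by
  classical
  obtain ⟨i₀, hi₀, hai₀⟩ := ha
  obtain ⟨i, hi, himax⟩ := (S.filter (a · ≠ 0)).exists_max_image
    (fun i => toLex (p i)) ⟨i₀, by simp [hi₀, hai₀]⟩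
  rw [Finset.mem_filter] at hi
  have ho : (fun t => ∑ j ∈ S.erase i, a j * zcE (p j) t) =o[atTop] zcE (p i) := by
    refine IsLittleO.fun_sum fun j hj => ?_
    rw [Finset.mem_erase] at hj
    by_cases haj : a j = 0
    · simp [haj]
    · have h1 := himax j (by simp [hj.2, haj])
      have h2 : toLex (p j) < toLex (p i) := lt_of_le_of_ne h1 (fun h => hj.1 (hp (toLex.injective h)))
      rw [Prod.Lex.toLex_lt_toLex] at h2
      exact (zcE_littleO h2).const_mul_left _
  have hb := ho.def (c := |a i| / 2) (by have := abs_pos.2 hi.2; positivity)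
  filter_upwards [hb, eventually_gt_atTop 0] with t ht ht0 h0
  rw [← Finset.add_sum_erase _ _ hi.1] at h0
  have hE : 0 < zcE (p i) t := by unfold zcE; positivity
  have h3 : ∑ j ∈ S.erase i, a j * zcE (p j) t = -(a i * zcE (p i) t) := by linarith
  rw [h3, norm_neg, norm_mul, Real.norm_eq_abs (a i)] at ht
  have h4 : 0 < ‖zcE (p i) t‖ := norm_pos_iff.2 hE.ne'
  nlinarith [abs_pos.2 hi.2]

/-- class of exponential polynomials in the logarithmic coordinate -/
inductive ZC : (ℝ → ℝ) → Prop
  | mono (c : ℝ) (p : ℝ × ℕ) : ZC (fun h => c * zcE p (zcT h))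
  | add {F G : ℝ → ℝ} : ZC F → ZC G → ZC (fun h => F h + G h)
  | congr {F G : ℝ → ℝ} : ZC F → (∀ h < 0, F h = G h) → ZC G

lemma eventually_eq_of_neg {F G : ℝ → ℝ} (h : ∀ x < 0, F x = G x) {x : ℝ} (hx : x < 0) :
    F =ᶠ[𝓝 x] G := by
  filter_upwards [Iio_mem_nhds hx] with y hy using h y hy

lemma ZC.zero : ZC (fun _ => 0) := (ZC.mono 0 0).congr (by simp)

lemma ZC.analyticAt {F : ℝ → ℝ} (hF : ZC F) : ∀ h < 0, AnalyticAt ℝ F h := by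
  induction hF with
  | mono c p => exact fun h hh => analyticAt_const.mul (zcE_analyticAt p hh)
  | add _ _ h1 h2 => exact fun h hh => (h1 h hh).add (h2 h hh)
  | congr _ e h1 => exact fun h hh => (h1 h hh).congr (eventually_eq_of_neg e hh)

lemma ZC.smul {F : ℝ → ℝ} (c : ℝ) (hF : ZC F) : ZC (fun h => c * F h) := by
  induction hF with
  | mono d p => exact (ZC.mono (c * d) p).congr (fun h _ => by ring)
  | add _ _ h1 h2 => exact (h1.add h2).congr (fun h _ => by ring)
  | congr _ e h1 => exact h1.congr (fun h hh => by rw [e h hh])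

lemma ZC.sub {F G : ℝ → ℝ} (hF : ZC F) (hG : ZC G) : ZC (fun h => F h - G h) :=
  (hF.add (hG.smul (-1))).congr (fun h _ => by ring)

lemma ZC.mul {F G : ℝ → ℝ} (hF : ZC F) (hG : ZC G) : ZC (fun h => F h * G h) := by
  induction hF with
  | add _ _ h1 h2 => exact (h1.add h2).congr (fun h _ => by ring)
  | congr _ e h1 => exact h1.congr (fun h hh => by rw [e h hh])
  | mono c p =>
    induction hG with
    | add _ _ h1 h2 => exact (h1.add h2).congr (fun h _ => by ring)
    | congr _ e h1 => exact h1.congr (fun h hh => by rw [e h hh])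
    | mono d q =>
      refine (ZC.mono (c * d) (p.1 + q.1, p.2 + q.2)).congr (fun h _ => ?_)
      simp only [zcE]
      rw [add_mul, Real.exp_add, pow_add]
      ring

lemma ZC.sum {ι : Type*} (S : Finset ι) (F : ι → ℝ → ℝ) (hF : ∀ i, ZC (F i)) :
    ZC (fun h => ∑ i ∈ S, F i h) := by
  classical
  induction S using Finset.induction_on with
  | empty => exact ZC.zero.congr (by simp)
  | insert i S hi ih => exact ((hF i).add ih).congr (fun h _ => by rw [Finset.sum_insert hi])

lemma ZC.deriv {F : ℝ → ℝ} (hF : ZC F) : ZC (deriv F) := by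
  induction hF with
  | mono c p =>
    refine ((ZC.mono (c * p.1) (p.1 + 1, p.2)).add
      (ZC.mono (c * p.2) (p.1 + 1, p.2 - 1))).congr (fun h hh => ?_)
    have hT := zcT_hasDerivAt hh
    have := ((hT.const_mul p.1).exp.mul (hT.pow p.2)).const_mul c
    refine Eq.trans ?_ this.deriv.symm
    simp only [zcE, add_mul, Real.exp_add, one_mul, Pi.pow_apply]
    ring
  | add h1 h2 i1 i2 =>
    refine (i1.add i2).congr (fun h hh => ?_)
    exact (deriv_add (h1.analyticAt h hh).differentiableAt
      (h2.analyticAt h hh).differentiableAt).symm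
  | congr _ e h1 => exact h1.congr (fun h hh => (eventually_eq_of_neg e hh).deriv_eq)

lemma ZC.exists_rep {F : ℝ → ℝ} (hF : ZC F) : ∃ a : (ℝ × ℕ) →₀ ℝ, ∀ h < 0,
    F h = a.sum fun p c => c * zcE p (zcT h) := by
  classical
  induction hF with
  | mono c p => exact ⟨Finsupp.single p c, fun h _ => by simp⟩
  | add _ _ h1 h2 =>
    obtain ⟨a, ha⟩ := h1
    obtain ⟨b, hb⟩ := h2
    refine ⟨a + b, fun h hh => ?_⟩
    beta_reduce
    rw [ha h hh, hb h hh, Finsupp.sum_add_index']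
    · simp
    · intros; ring
  | congr _ e h1 =>
    obtain ⟨a, ha⟩ := h1
    exact ⟨a, fun h hh => by rw [← e h hh, ha h hh]⟩

lemma ZC.eventually {F : ℝ → ℝ} (hF : ZC F) :
    (∀ h < 0, F h = 0) ∨ ∀ᶠ h in 𝓝[<] 0, F h ≠ 0 := by
  obtain ⟨a, ha⟩ := hF.exists_rep
  by_cases h0 : a = 0
  · left; intro h hh; rw [ha h hh, h0]; simp
  · right
    obtain ⟨p, hp⟩ := Finsupp.support_nonempty_iff.2 h0
    have := zcT_tendsto.eventually (zcE_sum_ne a.support id Function.injective_id a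
      ⟨p, hp, by simpa using hp⟩)
    filter_upwards [this, self_mem_nhdsWithin] with h h1 hh
    rw [ha h hh]; exact h1

/-- Rolle with multiplicities -/
lemma zc_rolle (Q : ℝ → ℝ) (a b : ℝ) (hQ : ∀ x ∈ Set.Ioo a b, AnalyticAt ℝ Q x)
    (Z : Finset ℝ) (hZ : ∀ z ∈ Z, z ∈ Set.Ioo a b) (m : ℝ → ℕ)
    (hm : ∀ z ∈ Z, (m z : ℕ∞) ≤ analyticOrderAt Q z) :
    ∃ (Z' : Finset ℝ) (m' : ℝ → ℕ), (∀ z ∈ Z', z ∈ Set.Ioo a b) ∧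
      (∀ z ∈ Z', (m' z : ℕ∞) ≤ analyticOrderAt (deriv Q) z) ∧
      ∑ z ∈ Z, m z ≤ ∑ z ∈ Z', m' z + 1 := by
  classical
  set Z₁ := Z.filter (0 < m ·) with hZ₁
  have hmem : ∀ z ∈ Z₁, z ∈ Z ∧ 0 < m z := fun z hz => by simpa [hZ₁] using hz
  have hzero : ∀ z ∈ Z₁, Q z = 0 := by
    intro z hz
    obtain ⟨h1, h2⟩ := hmem z hz
    apply apply_eq_zero_of_analyticOrderAt_ne_zero (𝕜 := ℝ)
    intro h
    have := hm z h1
    rw [h] at this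
    have : m z ≤ 0 := by exact_mod_cast this
    omega
  have hrolle : ∀ x y : ℝ, ∃ w : ℝ, x ∈ Z₁ → y ∈ Z₁ → x < y → w ∈ Set.Ioo x y ∧ deriv Q w = 0 := by
    intro x y
    by_cases h : x ∈ Z₁ ∧ y ∈ Z₁ ∧ x < y
    · obtain ⟨hx, hy, hxy⟩ := h
      have hx' := hZ x (hmem x hx).1
      have hy' := hZ y (hmem y hy).1
      obtain ⟨w, hw, hw'⟩ := exists_deriv_eq_zero (f := Q) hxy
        (fun u hu => (hQ u ⟨hx'.1.trans_le hu.1, hu.2.trans_lt hy'.2⟩).continuousAt.continuousWithinAt)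
        ((hzero x hx).trans (hzero y hy).symm)
      exact ⟨w, fun _ _ _ => ⟨hw, hw'⟩⟩
    · exact ⟨0, fun h1 h2 h3 => absurd ⟨h1, h2, h3⟩ h⟩
  choose w hw using hrolle
  set W := ((Z₁ ×ˢ Z₁).filter (fun q => q.1 < q.2)).image (fun q => w q.1 q.2) with hW
  have hWp : ∀ u ∈ W, u ∈ Set.Ioo a b ∧ deriv Q u = 0 := by
    intro u hu
    simp only [hW, Finset.mem_image, Finset.mem_filter, Finset.mem_product] at hu
    obtain ⟨⟨x, y⟩, ⟨⟨hx, hy⟩, hxy⟩, rfl⟩ := hu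
    obtain ⟨h1, h2⟩ := hw x y hx hy hxy
    exact ⟨⟨(hZ x (hmem x hx).1).1.trans h1.1, h1.2.trans (hZ y (hmem y hy).1).2⟩, h2⟩
  have hcard : Z₁.card ≤ (W \ Z₁).card + 1 := by
    apply Finset.card_le_sdiff_of_interleaved
    intro x hx y hy hxy _
    obtain ⟨h1, h2⟩ := hw x y hx hy hxy
    refine ⟨w x y, ?_, h1.1, h1.2⟩
    simp only [hW, Finset.mem_image, Finset.mem_filter, Finset.mem_product]
    exact ⟨(x, y), ⟨⟨hx, hy⟩, hxy⟩, rfl⟩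
  refine ⟨Z₁ ∪ (W \ Z₁), fun z => if z ∈ Z₁ then m z - 1 else 1, ?_, ?_, ?_⟩
  · intro z hz
    rcases Finset.mem_union.1 hz with h | h
    · exact hZ z (hmem z h).1
    · exact (hWp z (Finset.mem_sdiff.1 h).1).1
  · intro z hz
    beta_reduce
    by_cases h : z ∈ Z₁
    · obtain ⟨h1, h2⟩ := hmem z h
      have hA := hQ z (hZ z h1)
      rw [if_pos h, natCast_le_analyticOrderAt_iff_iteratedDeriv_eq_zero hA.deriv]
      intro i hi
      have := (natCast_le_analyticOrderAt_iff_iteratedDeriv_eq_zero hA).1 (hm z h1) (i + 1)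
        (by omega)
      rwa [iteratedDeriv_succ'] at this
    · rw [if_neg h]
      have h' : z ∈ W := by
        rcases Finset.mem_union.1 hz with h1 | h1
        · exact absurd h1 h
        · exact (Finset.mem_sdiff.1 h1).1
      obtain ⟨h1, h2⟩ := hWp z h'
      rw [natCast_le_analyticOrderAt_iff_iteratedDeriv_eq_zero (hQ z h1).deriv]
      intro i hi
      have : i = 0 := by omega
      subst this
      simpa using h2
  · rw [Finset.sum_union Finset.disjoint_sdiff]
    have e1 : ∑ z ∈ Z, m z = ∑ z ∈ Z₁, m z := by
      rw [hZ₁, Finset.sum_filter]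
      refine Finset.sum_congr rfl fun z _ => ?_
      split_ifs with h <;> omega
    have e2 : ∑ z ∈ Z₁, (if z ∈ Z₁ then m z - 1 else 1) + Z₁.card = ∑ z ∈ Z₁, m z := by
      rw [Finset.card_eq_sum_ones, ← Finset.sum_add_distrib]
      refine Finset.sum_congr rfl fun z hz => ?_
      rw [if_pos hz]
      have := (hmem z hz).2
      omega
    have e3 : ∑ z ∈ W \ Z₁, (if z ∈ Z₁ then m z - 1 else 1) = (W \ Z₁).card := by
      rw [Finset.card_eq_sum_ones]
      refine Finset.sum_congr rfl fun z hz => ?_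
      rw [if_neg (Finset.mem_sdiff.1 hz).2]
    omega

lemma zc_wronsk {k : ℕ} (g : Fin (k + 1) → ℝ → ℝ) (hg : ∀ s, ZC (g s)) (c : Fin (k + 1) → ℝ)
    {h : ℝ} (hh : h < 0) :
    deriv (fun x => ∑ s, c s * g s x) h * g 0 h - (∑ s, c s * g s h) * deriv (g 0) h =
      ∑ s : Fin k, c s.succ * (deriv (g s.succ) h * g 0 h - g s.succ h * deriv (g 0) h) := by
  have hd : ∀ s, DifferentiableAt ℝ (g s) h := fun s => ((hg s).analyticAt h hh).differentiableAt
  rw [deriv_fun_sum (fun s _ => (hd s).const_mul (c s))]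
  have e : ∀ s, deriv (fun x => c s * g s x) h = c s * deriv (g s) h :=
    fun s => deriv_const_mul _ (hd s)
  simp only [e]
  rw [Finset.sum_mul, Finset.sum_mul, ← Finset.sum_sub_distrib, Fin.sum_univ_succ]
  have : c 0 * deriv (g 0) h * g 0 h - c 0 * g 0 h * deriv (g 0) h = 0 := by ring
  rw [this, zero_add]
  exact Finset.sum_congr rfl fun s _ => by ring

lemma zc_deriv_div {k : ℕ} (g : Fin (k + 1) → ℝ → ℝ) (hg : ∀ s, ZC (g s)) (c : Fin (k + 1) → ℝ)
    {h : ℝ} (hh : h < 0) (h0 : g 0 h ≠ 0) :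
    deriv (fun x => (∑ s, c s * g s x) / g 0 x) h =
      (∑ s : Fin k, c s.succ * (deriv (g s.succ) h * g 0 h - g s.succ h * deriv (g 0) h)) /
        g 0 h ^ 2 := by
  rw [← zc_wronsk g hg c hh]
  have hF : ZC (fun x => ∑ s, c s * g s x) := ZC.sum _ _ fun s => (hg s).smul _
  exact deriv_fun_div (hF.analyticAt h hh).differentiableAt ((hg 0).analyticAt h hh).differentiableAt h0

lemma zc_main : ∀ (k : ℕ) (g : Fin k → ℝ → ℝ), (∀ s, ZC (g s)) →
    (∀ c : Fin k → ℝ, (∀ h < 0, ∑ s, c s * g s h = 0) → c = 0) →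
    ∃ ε ∈ Set.Ioo (0:ℝ) 1, ∀ c : Fin k → ℝ, c ≠ 0 → ∀ (Z : Finset ℝ) (m : ℝ → ℕ),
      (∀ z ∈ Z, z ∈ Set.Ioo (-ε) 0) →
      (∀ z ∈ Z, (m z : ℕ∞) ≤ analyticOrderAt (fun h => ∑ s, c s * g s h) z) →
      ∑ z ∈ Z, m z < k := by
  intro k
  induction k with
  | zero =>
    intro g _ _
    exact ⟨1 / 2, by norm_num, fun c hc => absurd (Subsingleton.elim c 0) hc⟩
  | succ k ih =>
    intro g hg hind
    have hev : ∀ᶠ h in 𝓝[<] (0:ℝ), g 0 h ≠ 0 := by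
      rcases (hg 0).eventually with h | h
      · exfalso
        have := congrFun (hind (Pi.single 0 1) (fun x hx => by
          simp [Pi.single_apply, h x hx])) 0
        simp at this
      · exact h
    obtain ⟨l, hl0, hl⟩ := mem_nhdsLT_iff_exists_Ioo_subset.1 hev
    have hl0 : l < 0 := hl0
    have hl' : ∀ x ∈ Set.Ioo l 0, g 0 x ≠ 0 := fun x hx => hl hx
    have hW : ∀ s : Fin k, ZC (fun h => deriv (g s.succ) h * g 0 h - g s.succ h * deriv (g 0) h) :=
      fun s => ((hg _).deriv.mul (hg 0)).sub ((hg _).mul (hg 0).deriv)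
    obtain ⟨ε', hε', H⟩ := ih _ hW (by
      intro c hc
      have hF : ∀ c : Fin (k+1) → ℝ, ZC (fun x => ∑ s, c s * g s x) :=
        fun c => ZC.sum _ _ fun s => (hg s).smul _
      have hA := hF (Fin.cons 0 c)
      obtain ⟨C, hC⟩ := isOpen_Ioo.exists_is_const_of_deriv_eq_zero (s := Set.Ioo l 0)
        (f := fun x => (∑ s, (Fin.cons 0 c : Fin (k+1) → ℝ) s * g s x) / g 0 x)
        isPreconnected_Ioo
        (fun x hx => ((hA.analyticAt x hx.2).div ((hg 0).analyticAt x hx.2)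
          (hl' x hx)).differentiableAt.differentiableWithinAt)
        (fun x hx => by
          rw [zc_deriv_div g hg _ hx.2 (hl' x hx)]
          simp only [Fin.cons_succ]
          rw [hc x hx.2]; simp)
      have hz : ∀ x ∈ Set.Ioo l 0, ∑ s, (Fin.cons (-C) c : Fin (k+1) → ℝ) s * g s x = 0 := by
        intro x hx
        have := hC x hx
        rw [div_eq_iff (hl' x hx)] at this
        rw [Fin.sum_univ_succ] at this ⊢
        simp only [Fin.cons_zero, Fin.cons_succ] at this ⊢
        linarith
      have hcons : (Fin.cons (-C) c : Fin (k+1) → ℝ) = 0 := by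
        apply hind
        rcases (hF (Fin.cons (-C) c)).eventually with h | h
        · exact h
        · exfalso
          obtain ⟨x, h1, h2⟩ := (h.and (Ioo_mem_nhdsLT hl0)).exists
          exact h1 (hz x h2)
      funext s
      simpa using congrFun hcons s.succ)
    refine ⟨min ε' (-l), ⟨lt_min hε'.1 (by linarith), (min_le_left _ _).trans_lt hε'.2⟩, ?_⟩
    intro c hc Z m hZ hm
    set ε := min ε' (-l) with hε
    have hsub1 : ∀ x ∈ Set.Ioo (-ε) 0, x ∈ Set.Ioo (-ε') 0 := fun x hx =>
      ⟨by have := min_le_left ε' (-l); have := hx.1; linarith, hx.2⟩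
    have hsub2 : ∀ x ∈ Set.Ioo (-ε) 0, x ∈ Set.Ioo l 0 := fun x hx =>
      ⟨by have := min_le_right ε' (-l); have := hx.1; linarith, hx.2⟩
    have hF : ZC (fun x => ∑ s, c s * g s x) := ZC.sum _ _ fun s => (hg s).smul _
    by_cases hc' : (fun s : Fin k => c s.succ) = 0
    · have hc0 : c 0 ≠ 0 := by
        intro h
        apply hc
        funext s
        refine Fin.cases h (fun i => congrFun hc' i) s
      have : ∑ z ∈ Z, m z = 0 := by
        refine Finset.sum_eq_zero fun z hz => ?_
        have h1 := hm z hz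
        have h2 := hZ z hz
        have h3 : analyticOrderAt (fun h => ∑ s, c s * g s h) z = 0 := by
          rw [(hF.analyticAt z h2.2).analyticOrderAt_eq_zero, Fin.sum_univ_succ]
          have e : ∀ i : Fin k, c i.succ = 0 := fun i => congrFun hc' i
          simp [e, hc0, hl' z (hsub2 z h2)]
        rw [h3] at h1
        have : m z ≤ 0 := by exact_mod_cast h1
        omega
      omega
    · have hinv : ∀ x ∈ Set.Ioo (-ε) 0, AnalyticAt ℝ (fun y => (g 0 y)⁻¹) x := fun x hx =>
        ((hg 0).analyticAt x hx.2).inv (hl' x (hsub2 x hx))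
      obtain ⟨Z', m', hZ', hm', hsum⟩ := zc_rolle
        (fun x => (∑ s, c s * g s x) / g 0 x) (-ε) 0
        (fun x hx => (hF.analyticAt x hx.2).div ((hg 0).analyticAt x hx.2) (hl' x (hsub2 x hx)))
        Z hZ m (by
          intro z hz
          refine (hm z hz).trans ?_
          have e : (fun x => (∑ s, c s * g s x) / g 0 x) =
              (fun x => ∑ s, c s * g s x) * (fun y => (g 0 y)⁻¹) := by
            funext x; simp [div_eq_mul_inv]
          rw [e, analyticOrderAt_mul (hF.analyticAt z (hZ z hz).2) (hinv z (hZ z hz))]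
          exact le_self_add)
      have := H (fun s => c s.succ) hc' Z' m' (fun z hz => hsub1 z (hZ' z hz)) (by
        intro z hz
        have hzI := hZ' z hz
        refine (hm' z hz).trans ?_
        have hg2 : AnalyticAt ℝ (fun x => g 0 x ^ 2) z := ((hg 0).analyticAt z hzI.2).pow 2
        have hQ : AnalyticAt ℝ (deriv (fun x => (∑ s, c s * g s x) / g 0 x)) z :=
          ((hF.analyticAt z hzI.2).div ((hg 0).analyticAt z hzI.2) (hl' z (hsub2 z hzI))).deriv
        have e : (fun h => ∑ s : Fin k, c s.succ *
            (deriv (g s.succ) h * g 0 h - g s.succ h * deriv (g 0) h)) =ᶠ[𝓝 z]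
            deriv (fun x => (∑ s, c s * g s x) / g 0 x) * (fun x => g 0 x ^ 2) := by
          filter_upwards [isOpen_Ioo.mem_nhds hzI] with x hx
          have h0 := hl' x (hsub2 x hx)
          rw [Pi.mul_apply, zc_deriv_div g hg c hx.2 h0]
          exact (div_mul_cancel₀ _ (pow_ne_zero 2 h0)).symm
        rw [analyticOrderAt_congr e, analyticOrderAt_mul hQ hg2]
        exact le_self_add)
      omega

theorem zero_counting_principle
    (k : ℕ) (f : Fin k → ℝ → ℝ)
    (hforms : ∀ s : Fin k,
      (∃ r : ℚ, 0 ≤ r ∧ f s = fun h : ℝ => |h| ^ (r : ℝ)) ∨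
      (∃ m : ℕ, 0 < m ∧ f s = fun h : ℝ => h ^ m * Real.log |h|))
    (hdist : Function.Injective f) :
    ∃ ε₀ ∈ Set.Ioo (0:ℝ) 1, ∀ c : Fin k → ℝ, c ≠ 0 →
      ∀ (d : ℕ) (z : Fin d → ℝ) (m : Fin d → ℕ),
        Function.Injective z →
        (∀ ℓ, z ℓ ∈ Set.Ioo (-ε₀) 0) →
        (∀ ℓ, 0 < m ℓ) →
        (∀ ℓ, ∀ p < m ℓ, iteratedDeriv p (fun h => ∑ s, c s * f s h) (z ℓ) = 0) →
        ∑ ℓ, m ℓ ≤ k - 1 := by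
  classical
  have hrep : ∀ s, ∃ (p : ℝ × ℕ) (a : ℝ), a ≠ 0 ∧ (∀ h < 0, f s h = a * zcE p (zcT h)) ∧
      ((∃ r : ℚ, p = (-(r:ℝ), 0) ∧ f s = fun h : ℝ => |h| ^ (r : ℝ)) ∨
       (∃ m : ℕ, p = (-(m:ℝ), 1) ∧ f s = fun h : ℝ => h ^ m * Real.log |h|)) := by
    intro s
    rcases hforms s with ⟨r, _, hr⟩ | ⟨m, _, hm⟩
    · refine ⟨(-(r:ℝ), 0), 1, one_ne_zero, fun h hh => ?_, Or.inl ⟨r, rfl, hr⟩⟩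
      rw [hr]
      simp only [zcE, zcT]
      rw [abs_of_neg hh, Real.rpow_def_of_pos (by linarith)]
      simp [mul_comm]
    · refine ⟨(-(m:ℝ), 1), -(-1) ^ m, by simp, fun h hh => ?_, Or.inr ⟨m, rfl, hm⟩⟩
      rw [hm]
      simp only [zcE, zcT]
      have e : Real.exp (-(m:ℝ) * -Real.log (-h)) = (-h) ^ m := by
        rw [neg_mul_neg, Real.exp_nat_mul, Real.exp_log (by linarith)]
      rw [e, abs_of_neg hh, neg_pow h m]
      have : ((-1:ℝ) ^ m) * (-1) ^ m = 1 := by rw [← mul_pow]; simp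
      linear_combination (-(h ^ m * Real.log (-h))) * this
  choose p a ha hfa hcase using hrep
  have hp : Function.Injective p := by
    intro s t hst
    apply hdist
    rcases hcase s with ⟨r, h1, h2⟩ | ⟨r, h1, h2⟩ <;> rcases hcase t with ⟨q, h3, h4⟩ | ⟨q, h3, h4⟩ <;>
      rw [h1, h3] at hst
    · have : r = q := by simpa using hst
      rw [h2, h4, this]
    · simp at hst
    · simp at hst
    · have : r = q := by simpa using hst
      rw [h2, h4, this]
  have hZC : ∀ s, ZC (f s) := fun s => (ZC.mono (a s) (p s)).congr (fun h hh => (hfa s h hh).symm)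
  obtain ⟨ε, hε, H⟩ := zc_main k f hZC (by
    intro c hc
    by_contra hne
    obtain ⟨s, hs⟩ := Function.ne_iff.1 hne
    have h1 := zcT_tendsto.eventually (zcE_sum_ne Finset.univ p hp (fun s => c s * a s)
      ⟨s, Finset.mem_univ _, mul_ne_zero hs (ha s)⟩)
    obtain ⟨x, hx, hx0⟩ := (h1.and (self_mem_nhdsWithin (s := Set.Iio (0:ℝ)))).exists
    apply hx
    rw [← hc x hx0]
    exact Finset.sum_congr rfl fun s _ => by rw [hfa s x hx0]; ring)
  refine ⟨ε, hε, fun c hc d z m hz hzI hm0 hm => ?_⟩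
  have hF : ZC (fun x => ∑ s, c s * f s x) := ZC.sum _ _ fun s => (hZC s).smul _
  have hext : ∀ ℓ, Function.extend z m 0 (z ℓ) = m ℓ := fun ℓ => hz.extend_apply m 0 ℓ
  have := H c hc (Finset.univ.image z) (Function.extend z m 0)
    (by
      intro x hx
      obtain ⟨ℓ, _, rfl⟩ := Finset.mem_image.1 hx
      exact hzI ℓ)
    (by
      intro x hx
      obtain ⟨ℓ, _, rfl⟩ := Finset.mem_image.1 hx
      rw [hext, natCast_le_analyticOrderAt_iff_iteratedDeriv_eq_zero
        (hF.analyticAt _ (hzI ℓ).2)]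
      exact hm ℓ)
  rw [Finset.sum_image (fun x _ y _ h => hz h)] at this
  simp only [hext] at this
  omega
end

section
/- For the quintic Hamiltonian H(x,y) = y²/2 − x⁴/4 + x⁵/5, the Abelian integrals along a closed level curve at level h satisfy I_{4,1} = I_{3,1}, and for every integer i ≥ 5: (4i+14)·I_{i,1} = (5i+10)·I_{i−1,1} + 20·(i−4)·h·I_{i−5,1}. -/
/-- For the quintic Hamiltonian `H(x,y) = y²/2 − x⁴/4 + x⁵/5`, the Abelian integrals along
a closed level curve at level `h` satisfy `I_{4,1} = I_{3,1}` and, for `i ≥ 5`,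
`(4i+14)·I_{i,1} = (5i+10)·I_{i−1,1} + 20(i−4)·h·I_{i−5,1}`. -/
theorem quintic_closed_recursion_ii
    (H : ℝ → ℝ → ℝ) (hH : ∀ x y, H x y = y ^ 2 / 2 - x ^ 4 / 4 + x ^ 5 / 5)
    (h : ℝ) (γ₁ γ₂ : ℝ → ℝ)
    (hγ₁ : ContDiff ℝ 1 γ₁) (hγ₂ : ContDiff ℝ 1 γ₂)
    (hclosed₁ : γ₁ 0 = γ₁ 1) (hclosed₂ : γ₂ 0 = γ₂ 1)
    (hlevel : ∀ t ∈ Set.Icc (0:ℝ) 1, H (γ₁ t) (γ₂ t) = h)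
    (I : ℕ → ℕ → ℝ)
    (hI : ∀ i j, I i j = ∫ t in (0:ℝ)..1, γ₁ t ^ i * γ₂ t ^ j * deriv γ₁ t) :
    I 4 1 = I 3 1 ∧
      ∀ i : ℕ, 5 ≤ i →
        (4 * i + 14 : ℝ) * I i 1 =
          (5 * i + 10 : ℝ) * I (i - 1) 1 + 20 * ((i : ℝ) - 4) * h * I (i - 5) 1 := by
  have d₁ : ∀ t, HasDerivAt γ₁ (deriv γ₁ t) t := fun t =>
    (hγ₁.differentiable (by norm_num) t).hasDerivAt
  have d₂ : ∀ t, HasDerivAt γ₂ (deriv γ₂ t) t := fun t =>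
    (hγ₂.differentiable (by norm_num) t).hasDerivAt
  have c₁ : Continuous γ₁ := hγ₁.continuous
  have c₂ : Continuous γ₂ := hγ₂.continuous
  have c₃ : Continuous (deriv γ₁) := hγ₁.continuous_deriv (by norm_num)
  have lev : ∀ t ∈ Set.Icc (0:ℝ) 1, γ₂ t ^ 2 / 2 - γ₁ t ^ 4 / 4 + γ₁ t ^ 5 / 5 = h := by
    intro t ht
    rw [← hH]
    exact hlevel t ht
  have key : ∀ t ∈ Set.Ioo (0:ℝ) 1,
      γ₂ t * deriv γ₂ t = (γ₁ t ^ 3 - γ₁ t ^ 4) * deriv γ₁ t := by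
    intro t ht
    have e : (fun s => γ₂ s ^ 2 / 2 - γ₁ s ^ 4 / 4 + γ₁ s ^ 5 / 5) =ᶠ[nhds t] fun _ => h := by
      filter_upwards [Ioo_mem_nhds ht.1 ht.2] with s hs
      exact lev s (Set.Ioo_subset_Icc_self hs)
    have a := (((d₂ t).fun_pow 2).div_const 2).fun_sub (((d₁ t).fun_pow 4).div_const 4)
    have b := a.fun_add (((d₁ t).fun_pow 5).div_const 5)
    have u := b.unique ((hasDerivAt_const t h).congr_of_eventuallyEq e)
    norm_num at u
    linarith
  have main : ∀ k : ℕ, (∫ t in (0:ℝ)..1,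
      (2 * k * h * (γ₁ t ^ (k - 1) * γ₂ t ^ 1 * deriv γ₁ t)
        + k / 2 * (γ₁ t ^ (k - 1 + 4) * γ₂ t ^ 1 * deriv γ₁ t)
        - 2 * k / 5 * (γ₁ t ^ (k - 1 + 5) * γ₂ t ^ 1 * deriv γ₁ t)
        + 3 * (γ₁ t ^ (k + 3) * γ₂ t ^ 1 * deriv γ₁ t)
        - 3 * (γ₁ t ^ (k + 4) * γ₂ t ^ 1 * deriv γ₁ t))) = 0 := by
    intro k
    rw [intervalIntegral.integral_eq_sub_of_hasDerivAt_of_le (f := fun t => γ₁ t ^ k * γ₂ t ^ 3)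
      zero_le_one]
    · simp [hclosed₁, hclosed₂]
    · fun_prop
    · intro t ht
      refine (((d₁ t).fun_pow k).fun_mul ((d₂ t).fun_pow 3)).congr_deriv ?_
      have e1 := key t ht
      have e2 := lev t (Set.Ioo_subset_Icc_self ht)
      simp only [pow_add]
      rw [← e2]
      norm_num
      linear_combination (3 * γ₁ t ^ k * γ₂ t) * e1
    · apply Continuous.intervalIntegrable
      fun_prop
  have ii : ∀ (c : ℝ) (i : ℕ), IntervalIntegrable
      (fun t => c * (γ₁ t ^ i * γ₂ t ^ 1 * deriv γ₁ t)) MeasureTheory.volume 0 1 := by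
    intro c i
    apply Continuous.intervalIntegrable
    fun_prop
  have main2 : ∀ k : ℕ, 2 * k * h * I (k - 1) 1 + k / 2 * I (k - 1 + 4) 1
      - 2 * k / 5 * I (k - 1 + 5) 1 + 3 * I (k + 3) 1 - 3 * I (k + 4) 1 = 0 := by
    intro k
    have m := main k
    rw [intervalIntegral.integral_sub ((((ii _ _).add (ii _ _)).sub (ii _ _)).add (ii _ _)) (ii _ _),
      intervalIntegral.integral_add (((ii _ _).add (ii _ _)).sub (ii _ _)) (ii _ _),
      intervalIntegral.integral_sub ((ii _ _).add (ii _ _)) (ii _ _),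
      intervalIntegral.integral_add (ii _ _) (ii _ _)] at m
    simp only [intervalIntegral.integral_const_mul, ← hI] at m
    exact m
  constructor
  · have m := main2 0
    norm_num at m
    linarith
  · intro i hi
    obtain ⟨m, rfl⟩ := Nat.exists_eq_add_of_le hi
    have q := main2 (m + 1)
    have e1 : 5 + m - 1 = m + 4 := by omega
    have e2 : 5 + m - 5 = m := by omega
    have e3 : m + 1 + 3 = m + 4 := by omega
    have e4 : m + 1 + 4 = m + 5 := by omega
    rw [e1, e2, Nat.add_comm 5 m]
    rw [e3, e4, Nat.add_sub_cancel] at q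
    push_cast at q ⊢
    linear_combination (-10) * q
end

section
/- For the quintic Hamiltonian H(x,y) = y²/2 − x⁴/4 + x⁵/5, the integrals along an arc of a level curve at level h satisfy, for all integers i ≥ 5 and j ≥ 0: (4i + 10j + 4)·I⁺_{i,j} = 20·(i−4)·h·I⁺_{i−5,j} + 5·(i+2j)·I⁺_{i−1,j} − 10·K_{i−4,j+2}. -/
/-- For the quintic Hamiltonian `H(x,y) = y²/2 − x⁴/4 + x⁵/5`, the integrals along an arc
of a level curve at level `h` satisfy, for `i ≥ 5` and `j ≥ 0`:
`(4i+10j+4)·I⁺_{i,j} = 20(i−4)·h·I⁺_{i−5,j} + 5(i+2j)·I⁺_{i−1,j} − 10·K_{i−4,j+2}`. -/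
theorem quintic_arc_recursion_ii
    (H : ℝ → ℝ → ℝ) (hH : ∀ x y, H x y = y ^ 2 / 2 - x ^ 4 / 4 + x ^ 5 / 5)
    (h : ℝ) (γ₁ γ₂ : ℝ → ℝ)
    (hγ₁ : ContDiff ℝ 1 γ₁) (hγ₂ : ContDiff ℝ 1 γ₂)
    (hlevel : ∀ t ∈ Set.Icc (0:ℝ) 1, H (γ₁ t) (γ₂ t) = h)
    (Ip : ℕ → ℕ → ℝ)
    (hIp : ∀ i j, Ip i j = ∫ t in (0:ℝ)..1, γ₁ t ^ i * γ₂ t ^ j * deriv γ₁ t)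
    (K : ℕ → ℕ → ℝ)
    (hK : ∀ i j, K i j = γ₁ 1 ^ i * γ₂ 1 ^ j - γ₁ 0 ^ i * γ₂ 0 ^ j) :
    ∀ i j : ℕ, 5 ≤ i →
      (4 * i + 10 * j + 4 : ℝ) * Ip i j =
        20 * ((i : ℝ) - 4) * h * Ip (i - 5) j + 5 * ((i : ℝ) + 2 * j) * Ip (i - 1) j
          - 10 * K (i - 4) (j + 2) := by
  intro i j hi
  obtain ⟨n, rfl⟩ : ∃ n, i = n + 5 := ⟨i - 5, by omega⟩
  have e1 : n + 5 - 5 = n := by omega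
  have e2 : n + 5 - 1 = n + 4 := by omega
  have e3 : n + 5 - 4 = n + 1 := by omega
  rw [e1, e2, e3]
  have c1 : Continuous γ₁ := hγ₁.continuous
  have c2 : Continuous γ₂ := hγ₂.continuous
  have cd : Continuous (deriv γ₁) := hγ₁.continuous_deriv le_rfl
  have d1 : ∀ t, HasDerivAt γ₁ (deriv γ₁ t) t := fun t =>
    (hγ₁.differentiable one_ne_zero t).hasDerivAt
  have d2 : ∀ t, HasDerivAt γ₂ (deriv γ₂ t) t := fun t =>
    (hγ₂.differentiable one_ne_zero t).hasDerivAt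
  have cI : ∀ a b : ℕ, Continuous (fun t => γ₁ t ^ a * γ₂ t ^ b * deriv γ₁ t) := by
    intro a b
    fun_prop
  have iI : ∀ (c : ℝ) (a b : ℕ), IntervalIntegrable
      (fun t => c * (γ₁ t ^ a * γ₂ t ^ b * deriv γ₁ t)) MeasureTheory.volume 0 1 :=
    fun c a b => ((cI a b).const_mul c).intervalIntegrable 0 1
  have key := intervalIntegral.integral_eq_sub_of_hasDerivAt_of_le (a := (0:ℝ)) (b := 1)
    (f := fun t => 10 * (γ₁ t ^ (n + 1) * γ₂ t ^ (j + 2)))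
    (f' := fun t => 20 * ((n : ℝ) + 1) * h * (γ₁ t ^ n * γ₂ t ^ j * deriv γ₁ t)
      + 5 * ((n : ℝ) + 5 + 2 * j) * (γ₁ t ^ (n + 4) * γ₂ t ^ j * deriv γ₁ t)
      - (4 * ((n : ℝ) + 5) + 10 * j + 4) * (γ₁ t ^ (n + 5) * γ₂ t ^ j * deriv γ₁ t))
    zero_le_one (by fun_prop) ?_ (((iI _ _ _).add (iI _ _ _)).sub (iI _ _ _))
  · rw [intervalIntegral.integral_sub ((iI _ _ _).add (iI _ _ _)) (iI _ _ _),
      intervalIntegral.integral_add (iI _ _ _) (iI _ _ _)] at key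
    simp only [intervalIntegral.integral_const_mul, ← hIp] at key
    rw [hK]
    push_cast
    linarith
  · intro t ht
    have hl : γ₂ t ^ 2 / 2 - γ₁ t ^ 4 / 4 + γ₁ t ^ 5 / 5 = h := by
      rw [← hH]
      exact hlevel t (Set.Ioo_subset_Icc_self ht)
    have hd := ((((d2 t).pow 2).div_const 2).sub (((d1 t).pow 4).div_const 4)).add
      (((d1 t).pow 5).div_const 5)
    have h0 : HasDerivAt (fun s => γ₂ s ^ 2 / 2 - γ₁ s ^ 4 / 4 + γ₁ s ^ 5 / 5) 0 t := by
      refine (hasDerivAt_const t h).congr_of_eventuallyEq ?_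
      filter_upwards [Ioo_mem_nhds ht.1 ht.2] with s hs
      rw [← hH]
      exact hlevel s (Set.Ioo_subset_Icc_self hs)
    have hz := hd.unique h0
    have hz' : γ₂ t * deriv γ₂ t = (γ₁ t ^ 3 - γ₁ t ^ 4) * deriv γ₁ t := by
      norm_num at hz
      linarith
    refine ((((d1 t).pow (n + 1)).mul ((d2 t).pow (j + 2))).const_mul 10).congr_deriv ?_
    have hy : γ₂ t ^ 2 = 2 * h + γ₁ t ^ 4 / 2 - 2 * γ₁ t ^ 5 / 5 := by linarith
    simp only [Nat.add_sub_cancel, Pi.pow_apply]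
    have e4 : j + 2 - 1 = j + 1 := by omega
    rw [e4]
    push_cast
    linear_combination (10 * ((n : ℝ) + 1) * γ₁ t ^ n * γ₂ t ^ j * deriv γ₁ t) * hy
      + (10 * ((j : ℝ) + 2) * γ₁ t ^ (n + 1) * γ₂ t ^ j) * hz'
end

section
/- For the quintic Hamiltonian H(x,y) = y²/2 − x⁴/4 + x⁵/5, the Abelian integrals along a closed level curve at level h satisfy the two identities: I_{0,3} = (30/17)·h·I_{0,1} + (3/34)·I_{3,1}, and I_{1,3} = (15/323)·h·I_{0,1} + (30/19)·h·I_{1,1} + (105/1292)·I_{3,1}. -/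
/-- For the quintic Hamiltonian `H(x,y) = y²/2 − x⁴/4 + x⁵/5`, the Abelian integrals along
a closed level curve at level `h` satisfy
`I_{0,3} = (30/17)·h·I_{0,1} + (3/34)·I_{3,1}` and
`I_{1,3} = (15/323)·h·I_{0,1} + (30/19)·h·I_{1,1} + (105/1292)·I_{3,1}`. -/
theorem quintic_cubic_identities
    (H : ℝ → ℝ → ℝ) (hH : ∀ x y, H x y = y ^ 2 / 2 - x ^ 4 / 4 + x ^ 5 / 5)
    (h : ℝ) (γ₁ γ₂ : ℝ → ℝ)
    (hγ₁ : ContDiff ℝ 1 γ₁) (hγ₂ : ContDiff ℝ 1 γ₂)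
    (hclosed₁ : γ₁ 0 = γ₁ 1) (hclosed₂ : γ₂ 0 = γ₂ 1)
    (hlevel : ∀ t ∈ Set.Icc (0:ℝ) 1, H (γ₁ t) (γ₂ t) = h)
    (I : ℕ → ℕ → ℝ)
    (hI : ∀ i j, I i j = ∫ t in (0:ℝ)..1, γ₁ t ^ i * γ₂ t ^ j * deriv γ₁ t) :
    I 0 3 = (30 / 17) * h * I 0 1 + (3 / 34) * I 3 1 ∧
      I 1 3 = (15 / 323) * h * I 0 1 + (30 / 19) * h * I 1 1 + (105 / 1292) * I 3 1 := by
  have d1 : ∀ t, HasDerivAt γ₁ (deriv γ₁ t) t := fun t =>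
    (hγ₁.differentiable (by norm_num) t).hasDerivAt
  have d2 : ∀ t, HasDerivAt γ₂ (deriv γ₂ t) t := fun t =>
    (hγ₂.differentiable (by norm_num) t).hasDerivAt
  have c1 : Continuous γ₁ := hγ₁.continuous
  have c2 : Continuous γ₂ := hγ₂.continuous
  have c1' : Continuous (deriv γ₁) := hγ₁.continuous_deriv (by norm_num)
  have hlev : ∀ t ∈ Set.Icc (0:ℝ) 1,
      γ₂ t ^ 2 / 2 - γ₁ t ^ 4 / 4 + γ₁ t ^ 5 / 5 = h := by
    intro t ht
    rw [← hH]
    exact hlevel t ht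
  have hint : ∀ i j, IntervalIntegrable (fun t => γ₁ t ^ i * γ₂ t ^ j * deriv γ₁ t)
      MeasureTheory.volume 0 1 := fun i j =>
    Continuous.intervalIntegrable (by fun_prop) _ _
  -- differentiating the level relation
  have hrel : ∀ t ∈ Set.Ioo (0:ℝ) 1,
      γ₂ t * deriv γ₂ t = (γ₁ t ^ 3 - γ₁ t ^ 4) * deriv γ₁ t := by
    intro t ht
    have e1 := ((((d2 t).pow 2).div_const 2).sub (((d1 t).pow 4).div_const 4)).add
      (((d1 t).pow 5).div_const 5)
    have e2 := (hasDerivAt_const t h).congr_of_eventuallyEq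
      (f₁ := fun t => γ₂ t ^ 2 / 2 - γ₁ t ^ 4 / 4 + γ₁ t ^ 5 / 5) (by
        filter_upwards [Ioo_mem_nhds ht.1 ht.2] with s hs
        exact hlev s ⟨hs.1.le, hs.2.le⟩)
    have e3 := e1.unique e2
    norm_num at e3
    linarith
  -- integrating the exact form `d (x ^ a y ^ 3)`
  have hexact : ∀ a : ℕ, (a : ℝ) * I (a - 1) 3 + 3 * I (a + 3) 1 - 3 * I (a + 4) 1 = 0 := by
    intro a
    have key := intervalIntegral.integral_eq_sub_of_hasDerivAt_of_le (a := 0) (b := 1)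
      (f := fun t => γ₁ t ^ a * γ₂ t ^ 3)
      (f' := fun t => (a : ℝ) * (γ₁ t ^ (a - 1) * γ₂ t ^ 3 * deriv γ₁ t)
        + 3 * (γ₁ t ^ (a + 3) * γ₂ t ^ 1 * deriv γ₁ t)
        - 3 * (γ₁ t ^ (a + 4) * γ₂ t ^ 1 * deriv γ₁ t)) zero_le_one
      (Continuous.continuousOn (by fun_prop))
      (by
        intro t ht
        have e := ((d1 t).pow a).mul ((d2 t).pow 3)
        refine e.congr_deriv ?_
        have r := hrel t ht
        simp only [Pi.pow_apply]
        norm_num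
        linear_combination 3 * γ₁ t ^ a * γ₂ t * r)
      (Continuous.intervalIntegrable (by fun_prop) _ _)
    rw [intervalIntegral.integral_sub
        (((hint _ _).const_mul _).add ((hint _ _).const_mul _)) ((hint _ _).const_mul _),
      intervalIntegral.integral_add ((hint _ _).const_mul _) ((hint _ _).const_mul _),
      intervalIntegral.integral_const_mul, intervalIntegral.integral_const_mul,
      intervalIntegral.integral_const_mul, ← hI, ← hI, ← hI] at key
    rw [key, hclosed₁, hclosed₂, sub_self]
  -- multiplying by the level relation
  have hred : ∀ i : ℕ, I i 3 = 2 * h * I i 1 + (1 / 2) * I (i + 4) 1 - (2 / 5) * I (i + 5) 1 := by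
    intro i
    rw [hI i 3, hI i 1, hI (i + 4) 1, hI (i + 5) 1,
      ← intervalIntegral.integral_const_mul, ← intervalIntegral.integral_const_mul,
      ← intervalIntegral.integral_const_mul,
      ← intervalIntegral.integral_add ((hint _ _).const_mul _) ((hint _ _).const_mul _),
      ← intervalIntegral.integral_sub
        (((hint _ _).const_mul _).add ((hint _ _).const_mul _)) ((hint _ _).const_mul _)]
    refine intervalIntegral.integral_congr ?_
    intro t ht
    rw [Set.uIcc_of_le zero_le_one] at ht
    have r := hlev t ht
    simp only
    linear_combination 2 * γ₁ t ^ i * γ₂ t * deriv γ₁ t * r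
  have a0 := hexact 0
  have a1 := hexact 1
  have a2 := hexact 2
  have b0 := hred 0
  have b1 := hred 1
  norm_num at a0 a1 a2 b0 b1
  have h03 : I 0 3 = (30 / 17) * h * I 0 1 + (3 / 34) * I 3 1 := by linarith
  exact ⟨h03, by linarith⟩
end

section
/- The column vector X(h) = (I_{0,1}(h), I_{1,1}(h), I_{2,1}(h), I_{3,1}(h))ᵀ is differentiable on (−1/20, 0) and satisfies the Picard–Fuchs system 20·h·(20·h + 1)·X′(h) = (A₀ + A₁·h)·X(h) for all h ∈ (−1/20, 0), where A₀ is the 4×4 matrix with rows (15, 2, 3, −26), (0, 20, 3, −26), (0, 0, 25, −26), (0, 0, 0, 0), and A₁ is the 4×4 matrix with rows (280, 0, 0, 0), (−20, 360, 0, 0), (−20, −40, 440, 0), (−20, −40, −60, 520). -/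
open Set Filter Topology MeasureTheory

namespace QPF

lemma hasDerivAt_k (s : ℝ) : HasDerivAt (fun s : ℝ => s * √s) (3 / 2 * √s) s := by
  rcases lt_trichotomy s 0 with h | h | h
  · rw [Real.sqrt_eq_zero_of_nonpos h.le, mul_zero]
    refine (hasDerivAt_const s (0:ℝ)).congr_of_eventuallyEq ?_
    filter_upwards [Iio_mem_nhds h] with t ht
    rw [Real.sqrt_eq_zero_of_nonpos (le_of_lt ht), mul_zero]
  · subst h
    rw [hasDerivAt_iff_tendsto_slope]
    have : Tendsto (fun t : ℝ => √t) (𝓝[≠] 0) (𝓝 (3 / 2 * √0)) := by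
      have := (Real.continuous_sqrt.tendsto 0).mono_left (nhdsWithin_le_nhds (s := {0}ᶜ))
      simpa using this
    refine this.congr' ?_
    filter_upwards [self_mem_nhdsWithin] with t ht
    have ht : t ≠ 0 := ht
    simp [slope_def_field]
    field_simp
  · have h1 := (hasDerivAt_id s).mul (Real.hasDerivAt_sqrt h.ne')
    refine h1.congr_deriv ?_
    have h2 := Real.sq_sqrt h.le
    have h3 : √s ≠ 0 := (Real.sqrt_pos.2 h).ne'
    simp only [id]
    field_simp
    nlinarith

/-- `2 (h - F x)` -/
noncomputable def q (h x : ℝ) : ℝ := 2 * (h - (-x ^ 4 / 4 + x ^ 5 / 5))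

noncomputable def N (i : ℕ) (h : ℝ) : ℝ := ∫ x in (0:ℝ)..(5/4), x ^ i * √(q h x)

noncomputable def M (i : ℕ) (h : ℝ) : ℝ := ∫ x in (0:ℝ)..(5/4), x ^ i * (q h x * √(q h x))

lemma cont_q (h : ℝ) : Continuous (q h) := by unfold q; fun_prop

lemma contN (i : ℕ) (h : ℝ) : Continuous (fun x => x ^ i * √(q h x)) := by
  have := cont_q h
  fun_prop

lemma contM (i : ℕ) (h : ℝ) : Continuous (fun x => x ^ i * (q h x * √(q h x))) := by
  have := cont_q h
  fun_prop

lemma hasDerivAt_M (i : ℕ) (h : ℝ) : HasDerivAt (M i) (3 * N i h) h := by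
  have key := intervalIntegral.hasDerivAt_integral_of_dominated_loc_of_deriv_le
    (μ := volume) (a := (0:ℝ)) (b := 5/4) (x₀ := h) (s := Iio (h+1))
    (F := fun h x => x ^ i * (q h x * √(q h x)))
    (F' := fun h x => 3 * (x ^ i * √(q h x)))
    (bound := fun x => 3 * (|x| ^ i * √(q (h+1) x)))
    (Iio_mem_nhds (by linarith))
    (Eventually.of_forall fun t => (contM i t).aestronglyMeasurable)
    ((contM i h).intervalIntegrable _ _)
    ((contN i h).const_mul 3).aestronglyMeasurable
    (Eventually.of_forall fun x _ t ht => by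
      have ht : t < h + 1 := ht
      have : √(q t x) ≤ √(q (h+1) x) := Real.sqrt_le_sqrt (by unfold q; linarith)
      rw [Real.norm_eq_abs, abs_mul, abs_mul, abs_pow, abs_of_nonneg (Real.sqrt_nonneg _),
        abs_of_pos (by norm_num : (0:ℝ) < 3)]
      gcongr)
    (by
      have := cont_q (h+1)
      exact Continuous.intervalIntegrable (by fun_prop) _ _)
    (Eventually.of_forall fun x _ t _ => by
      have h1 : HasDerivAt (fun t => q t x) 2 t := by
        unfold q
        simpa using ((hasDerivAt_id t).sub_const _).const_mul (2:ℝ)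
      have h2 := ((hasDerivAt_k (q t x)).comp t h1).const_mul (x ^ i)
      refine h2.congr_deriv ?_
      ring)
  have := key.2
  rw [intervalIntegral.integral_const_mul] at this
  exact this

/-- integration by parts -/
lemma parts (j : ℕ) (h : ℝ) (hh : h < 0) :
    (j : ℝ) * M (j - 1) h + 3 * (N (j + 3) h - N (j + 4) h) = 0 := by
  have hd : ∀ x, HasDerivAt (fun x => x ^ j * (q h x * √(q h x)))
      ((j : ℝ) * (x ^ (j-1) * (q h x * √(q h x)))
        + 3 * (x ^ (j+3) * √(q h x) - x ^ (j+4) * √(q h x))) x := by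
    intro x
    have h1 : HasDerivAt (q h) (2 * (x ^ 3 - x ^ 4)) x := by
      have a := ((hasDerivAt_pow 4 x).neg.div_const 4).add ((hasDerivAt_pow 5 x).div_const 5)
      have b := (a.const_sub h).const_mul (2:ℝ)
      refine b.congr_deriv ?_
      norm_num
      ring
    refine ((hasDerivAt_pow j x).mul ((hasDerivAt_k (q h x)).comp x h1)).congr_deriv ?_
    simp only [Function.comp]
    ring
  have i1 := (contM (j-1) h).intervalIntegrable (μ := volume) 0 (5/4)
  have i2 := (contN (j+3) h).intervalIntegrable (μ := volume) 0 (5/4)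
  have i3 := (contN (j+4) h).intervalIntegrable (μ := volume) 0 (5/4)
  have := intervalIntegral.integral_eq_sub_of_hasDerivAt (a := 0) (b := 5/4) (fun x _ => hd x)
    ((i1.const_mul _).add ((i2.sub i3).const_mul _))
  rw [intervalIntegral.integral_add (i1.const_mul _) ((i2.sub i3).const_mul _),
    intervalIntegral.integral_const_mul, intervalIntegral.integral_const_mul,
    intervalIntegral.integral_sub i2 i3] at this
  have e0 : √(q h 0) = 0 := Real.sqrt_eq_zero_of_nonpos (by unfold q; norm_num; linarith)
  have e1 : √(q h (5/4)) = 0 := Real.sqrt_eq_zero_of_nonpos (by unfold q; norm_num; linarith)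
  rw [e0, e1] at this
  unfold M N
  rw [this]; ring

lemma expand (i : ℕ) (h : ℝ) :
    M i h = 2 * h * N i h + 1 / 2 * N (i + 4) h - 2 / 5 * N (i + 5) h := by
  have i1 := (contN i h).intervalIntegrable (μ := volume) 0 (5/4)
  have i2 := (contN (i+4) h).intervalIntegrable (μ := volume) 0 (5/4)
  have i3 := (contN (i+5) h).intervalIntegrable (μ := volume) 0 (5/4)
  unfold M N
  rw [← intervalIntegral.integral_const_mul, ← intervalIntegral.integral_const_mul,
    ← intervalIntegral.integral_const_mul,
    ← intervalIntegral.integral_add (i1.const_mul _) (i2.const_mul _),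
    ← intervalIntegral.integral_sub ((i1.const_mul _).add (i2.const_mul _)) (i3.const_mul _)]
  refine intervalIntegral.integral_congr fun x _ => ?_
  simp only [q]
  ring

lemma F_anti {a b : ℝ} (ha : 0 ≤ a) (hab : a ≤ b) (hb : b ≤ 1) :
    -b ^ 4 / 4 + b ^ 5 / 5 ≤ -a ^ 4 / 4 + a ^ 5 / 5 := by
  have : AntitoneOn (fun x : ℝ => -x ^ 4 / 4 + x ^ 5 / 5) (Icc 0 1) := by
    refine antitoneOn_of_deriv_nonpos (convex_Icc _ _) (by fun_prop) (by fun_prop) ?_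
    intro x hx
    rw [interior_Icc] at hx
    have a := ((hasDerivAt_pow 4 x).neg.div_const 4).add ((hasDerivAt_pow 5 x).div_const 5)
    have e : deriv (fun x : ℝ => -x ^ 4 / 4 + x ^ 5 / 5) x = _ := a.deriv
    rw [e]
    norm_num
    have h3 := mul_nonneg (pow_nonneg hx.1.le 3) (sub_nonneg.2 hx.2.le)
    nlinarith
  exact this ⟨ha, by linarith⟩ ⟨by linarith, hb⟩ hab

lemma F_mono {a b : ℝ} (ha : 1 ≤ a) (hab : a ≤ b) :
    -a ^ 4 / 4 + a ^ 5 / 5 ≤ -b ^ 4 / 4 + b ^ 5 / 5 := by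
  have : MonotoneOn (fun x : ℝ => -x ^ 4 / 4 + x ^ 5 / 5) (Ici 1) := by
    refine monotoneOn_of_deriv_nonneg (convex_Ici _) (by fun_prop) (by fun_prop) ?_
    intro x hx
    rw [interior_Ici] at hx
    have hx : 1 < x := hx
    have a := ((hasDerivAt_pow 4 x).neg.div_const 4).add ((hasDerivAt_pow 5 x).div_const 5)
    have e : deriv (fun x : ℝ => -x ^ 4 / 4 + x ^ 5 / 5) x = _ := a.deriv
    rw [e]
    norm_num
    have h3 := mul_nonneg (pow_nonneg (by linarith : (0:ℝ) ≤ x) 3) (sub_nonneg.2 hx.le)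
    nlinarith
  exact this ha (le_trans ha hab) hab

lemma N_eq (i : ℕ) (h a b : ℝ) (ha : 0 < a) (ha1 : a < 1) (hb : 1 < b) (hb1 : b < 5/4)
    (hFa : -a ^ 4 / 4 + a ^ 5 / 5 = h) (hFb : -b ^ 4 / 4 + b ^ 5 / 5 = h) :
    ∫ x in a..b, x ^ i * √(q h x) = N i h := by
  have c := contN i h
  unfold N
  rw [← intervalIntegral.integral_add_adjacent_intervals (a := 0) (b := a) (c := 5/4)
      (c.intervalIntegrable _ _) (c.intervalIntegrable _ _),
    ← intervalIntegral.integral_add_adjacent_intervals (a := a) (b := b) (c := 5/4)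
      (c.intervalIntegrable _ _) (c.intervalIntegrable _ _)]
  have z1 : ∫ x in (0:ℝ)..a, x ^ i * √(q h x) = 0 := by
    refine (intervalIntegral.integral_congr (g := fun _ => (0:ℝ)) fun x hx => ?_).trans (by simp)
    rw [uIcc_of_le ha.le] at hx
    have := F_anti hx.1 hx.2 ha1.le
    show x ^ i * √(q h x) = 0
    rw [Real.sqrt_eq_zero_of_nonpos (by unfold q; linarith), mul_zero]
  have z2 : ∫ x in b..(5/4:ℝ), x ^ i * √(q h x) = 0 := by
    refine (intervalIntegral.integral_congr (g := fun _ => (0:ℝ)) fun x hx => ?_).trans (by simp)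
    rw [uIcc_of_le hb1.le] at hx
    have := F_mono hb.le hx.1
    show x ^ i * √(q h x) = 0
    rw [Real.sqrt_eq_zero_of_nonpos (by unfold q; linarith), mul_zero]
  rw [z1, z2]; ring

/-- The four relations between the `M`'s and the `N`'s. -/
lemma rels (h : ℝ) (hh : h < 0) :
    34 * M 0 h = 60 * h * N 0 h + 3 * N 3 h ∧
    38 * M 1 h = 60 * h * N 1 h + 3 * N 3 h + M 0 h ∧
    42 * M 2 h = 60 * h * N 2 h + 3 * N 3 h + M 0 h + 2 * M 1 h ∧
    46 * M 3 h = 60 * h * N 3 h + 3 * N 3 h + M 0 h + 2 * M 1 h + 3 * M 2 h := by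
  have p0 := parts 0 h hh
  have p1 := parts 1 h hh
  have p2 := parts 2 h hh
  have p3 := parts 3 h hh
  have p4 := parts 4 h hh
  have e0 := expand 0 h
  have e1 := expand 1 h
  have e2 := expand 2 h
  have e3 := expand 3 h
  norm_num at p0 p1 p2 p3 p4 e0 e1 e2 e3
  refine ⟨?_, ?_, ?_, ?_⟩ <;> linarith

lemma sysN (h : ℝ) (h0 : h ∈ Ioo (-1/20 : ℝ) 0) : ∃ d : Fin 4 → ℝ,
    (∀ i : Fin 4, HasDerivAt (N i) (d i) h) ∧
    14 * N 0 h = 20 * h * d 0 + d 3 ∧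
    18 * N 1 h = 20 * h * d 1 + d 3 + N 0 h ∧
    22 * N 2 h = 20 * h * d 2 + d 3 + N 0 h + 2 * N 1 h ∧
    26 * N 3 h = 20 * h * d 3 + d 3 + N 0 h + 2 * N 1 h + 3 * N 2 h := by
  have hne : h ≠ 0 := h0.2.ne
  have hne1 : 60 * h + 3 ≠ 0 := by have := h0.1; intro; linarith
  have hm : ∀ i, DifferentiableAt ℝ (M i) h := fun i => (hasDerivAt_M i h).differentiableAt
  have nh : Ioo (-1/20 : ℝ) 0 ∈ 𝓝 h := isOpen_Ioo.mem_nhds h0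
  have m0 := hm 0
  have m1 := hm 1
  have m2 := hm 2
  have m3 := hm 3
  have d3 : DifferentiableAt ℝ (N 3) h := by
    have : DifferentiableAt ℝ
        (fun t => (46 * M 3 t - M 0 t - 2 * M 1 t - 3 * M 2 t) / (60 * t + 3)) h := by
      fun_prop (disch := assumption)
    refine this.congr_of_eventuallyEq ?_
    filter_upwards [nh] with t ht
    have := (rels t ht.2).2.2.2
    have : 60 * t + 3 ≠ 0 := by have := ht.1; intro; linarith
    rw [eq_div_iff this]; linarith
  have hne2 : 60 * h ≠ 0 := by simpa using hne
  have d0 : DifferentiableAt ℝ (N 0) h := by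
    have : DifferentiableAt ℝ (fun t => (34 * M 0 t - 3 * N 3 t) / (60 * t)) h := by
      fun_prop (disch := assumption)
    refine this.congr_of_eventuallyEq ?_
    filter_upwards [nh] with t ht
    have := (rels t ht.2).1
    have h2 : 60 * t ≠ 0 := by simpa using ht.2.ne
    rw [eq_div_iff h2]; linarith
  have d1 : DifferentiableAt ℝ (N 1) h := by
    have : DifferentiableAt ℝ (fun t => (38 * M 1 t - 3 * N 3 t - M 0 t) / (60 * t)) h := by
      fun_prop (disch := assumption)
    refine this.congr_of_eventuallyEq ?_
    filter_upwards [nh] with t ht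
    have := (rels t ht.2).2.1
    have h2 : 60 * t ≠ 0 := by simpa using ht.2.ne
    rw [eq_div_iff h2]; linarith
  have d2 : DifferentiableAt ℝ (N 2) h := by
    have : DifferentiableAt ℝ
        (fun t => (42 * M 2 t - 3 * N 3 t - M 0 t - 2 * M 1 t) / (60 * t)) h := by
      fun_prop (disch := assumption)
    refine this.congr_of_eventuallyEq ?_
    filter_upwards [nh] with t ht
    have := (rels t ht.2).2.2.1
    have h2 : 60 * t ≠ 0 := by simpa using ht.2.ne
    rw [eq_div_iff h2]; linarith
  have n0 := d0.hasDerivAt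
  have n1 := d1.hasDerivAt
  have n2 := d2.hasDerivAt
  have n3 := d3.hasDerivAt
  have M0 := hasDerivAt_M 0 h
  have M1 := hasDerivAt_M 1 h
  have M2 := hasDerivAt_M 2 h
  have M3 := hasDerivAt_M 3 h
  have lin : HasDerivAt (fun t : ℝ => 60 * t) 60 h := by
    simpa using (hasDerivAt_id h).const_mul (60:ℝ)
  refine ⟨fun i => deriv (N i) h, ?_, ?_, ?_, ?_, ?_⟩
  · intro i
    fin_cases i
    exacts [n0, n1, n2, n3]
  · have a := M0.const_mul 34
    have b := (lin.mul n0).add (n3.const_mul 3)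
    have := a.unique (b.congr_of_eventuallyEq (by
      filter_upwards [nh] with t ht
      exact (rels t ht.2).1))
    simp
    linarith
  · have a := M1.const_mul 38
    have b := ((lin.mul n1).add (n3.const_mul 3)).add M0
    have := a.unique (b.congr_of_eventuallyEq (by
      filter_upwards [nh] with t ht
      exact (rels t ht.2).2.1))
    simp
    linarith
  · have a := M2.const_mul 42
    have b := (((lin.mul n2).add (n3.const_mul 3)).add M0).add (M1.const_mul 2)
    have := a.unique (b.congr_of_eventuallyEq (by
      filter_upwards [nh] with t ht
      exact (rels t ht.2).2.2.1))
    simp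
    linarith
  · have a := M3.const_mul 46
    have b := ((((lin.mul n3).add (n3.const_mul 3)).add M0).add (M1.const_mul 2)).add
      (M2.const_mul 3)
    have := a.unique (b.congr_of_eventuallyEq (by
      filter_upwards [nh] with t ht
      exact (rels t ht.2).2.2.2))
    simp
    linarith

end QPF

/-- For the quintic Hamiltonian `H(x,y) = y²/2 + F(x)` with `F(x) = −x⁴/4 + x⁵/5`, the
vector `X(h) = (I_{0,1}(h), I_{1,1}(h), I_{2,1}(h), I_{3,1}(h))ᵀ` is differentiable on
`(−1/20, 0)` and satisfies the Picard–Fuchs system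
`20h(20h+1)·X′(h) = (A₀ + A₁h)·X(h)`. -/
theorem quintic_picard_fuchs_system
    (F : ℝ → ℝ) (hF : ∀ x, F x = -x ^ 4 / 4 + x ^ 5 / 5)
    (x₁ x₂ : ℝ → ℝ)
    (hx₁d : ∀ h ∈ Set.Ioo (-1/20 : ℝ) 0, DifferentiableAt ℝ x₁ h)
    (hx₂d : ∀ h ∈ Set.Ioo (-1/20 : ℝ) 0, DifferentiableAt ℝ x₂ h)
    (hx : ∀ h ∈ Set.Ioo (-1/20 : ℝ) 0,
      0 < x₁ h ∧ x₁ h < 1 ∧ 1 < x₂ h ∧ x₂ h < 5/4)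
    (hF₁ : ∀ h ∈ Set.Ioo (-1/20 : ℝ) 0, F (x₁ h) = h)
    (hF₂ : ∀ h ∈ Set.Ioo (-1/20 : ℝ) 0, F (x₂ h) = h)
    (hbelow : ∀ h ∈ Set.Ioo (-1/20 : ℝ) 0, ∀ x ∈ Set.Ioo (x₁ h) (x₂ h), F x < h)
    (X : ℝ → Fin 4 → ℝ)
    (hX : ∀ h i, X h i = 2 * ∫ x in x₁ h..x₂ h, x ^ (i : ℕ) * Real.sqrt (2 * (h - F x)))
    (A₀ A₁ : Matrix (Fin 4) (Fin 4) ℝ)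
    (hA₀ : A₀ = !![15, 2, 3, -26; 0, 20, 3, -26; 0, 0, 25, -26; 0, 0, 0, 0])
    (hA₁ : A₁ = !![280, 0, 0, 0; -20, 360, 0, 0; -20, -40, 440, 0; -20, -40, -60, 520]) :
    ∃ X' : ℝ → Fin 4 → ℝ, ∀ h ∈ Set.Ioo (-1/20 : ℝ) 0,
      HasDerivAt X (X' h) h ∧
      (20 * h * (20 * h + 1)) • X' h = (A₀ + h • A₁).mulVec (X h) := by
  have hXN : ∀ h ∈ Set.Ioo (-1/20 : ℝ) 0, ∀ i : Fin 4, X h i = 2 * QPF.N i h := by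
    intro h hh i
    obtain ⟨a, b, c, d⟩ := hx h hh
    have e1 := hF₁ h hh
    have e2 := hF₂ h hh
    rw [hF] at e1 e2
    rw [hX, ← QPF.N_eq i h _ _ a b c d e1 e2]
    simp only [QPF.q, hF]
  have hs : ∀ h : ℝ, ∃ d : Fin 4 → ℝ, h ∈ Set.Ioo (-1/20 : ℝ) 0 → 
      (∀ i : Fin 4, HasDerivAt (QPF.N i) (d i) h) ∧
      14 * QPF.N 0 h = 20 * h * d 0 + d 3 ∧
      18 * QPF.N 1 h = 20 * h * d 1 + d 3 + QPF.N 0 h ∧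
      22 * QPF.N 2 h = 20 * h * d 2 + d 3 + QPF.N 0 h + 2 * QPF.N 1 h ∧
      26 * QPF.N 3 h = 20 * h * d 3 + d 3 + QPF.N 0 h + 2 * QPF.N 1 h + 3 * QPF.N 2 h := by
    intro h
    by_cases hh : h ∈ Set.Ioo (-1/20 : ℝ) 0
    · obtain ⟨d, hd⟩ := QPF.sysN h hh
      exact ⟨d, fun _ => hd⟩
    · exact ⟨0, fun h' => absurd h' hh⟩
  choose D hD using hs
  refine ⟨fun h i => 2 * D h i, fun h hh => ?_⟩
  obtain ⟨hd, r0, r1, r2, r3⟩ := hD h hh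
  refine ⟨?_, ?_⟩
  · rw [hasDerivAt_pi]
    intro i
    refine ((hd i).const_mul 2).congr_of_eventuallyEq ?_
    filter_upwards [isOpen_Ioo.mem_nhds hh] with t ht
    exact hXN t ht i
  · have e0 := hXN h hh 0
    have e1 := hXN h hh 1
    have e2 := hXN h hh 2
    have e3 := hXN h hh 3
    norm_num at e0 e1 e2 e3
    have e2 : X h 2 = 2 * QPF.N 2 h := e2
    have e3 : X h 3 = 2 * QPF.N 3 h := e3
    subst hA₀ hA₁
    funext i
    fin_cases i <;>
      simp [Matrix.mulVec, dotProduct, Fin.sum_univ_four, e0, e1, e2, e3]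
    · linear_combination (-2 * (20 * h + 1)) * r0 + 2 * r3
    · linear_combination (-2 * (20 * h + 1)) * r1 + 2 * r3
    · linear_combination (-2 * (20 * h + 1)) * r2 + 2 * r3
    · linear_combination (-2 * (20 * h)) * r3
end
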